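/- Let G be a reachability game and let F ⊆ S × S be a sufficient subgoal for G, i.e., REACH wins from every state in Post(F) in G. If REACH wins from a state s in the pre-game G_pre = ⟨Init, Safe ∖ F, Reach ∖ F, Pre(Enf(F, G))⟩, then REACH wins from s in G. -/

import Mathlib

universe u

/-- A reachability game over a state type `S`. States with `isReach s` are
controlled by player REACH, the others by player SAFE. -/
structure Game (S : Type u) where
  isReach : S → Prop
  Safe : S → S → Prop
  Reach : S → S → Prop
  Init : Set S
  Goal : Set S
  safe_src : ∀ s s', Safe s s' → ¬ isReach s
  reach_src : ∀ s s', Reach s s' → isReach s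

namespace Game

variable {S : Type u}

/-- The edge relation `E = Safe ∪ Reach`. -/
def E (G : Game S) (s s' : S) : Prop := G.Safe s s' ∨ G.Reach s s'

/-- A trap state has no outgoing `E`-transition. -/
def Trap (G : Game S) (s : S) : Prop := ∀ s', ¬ G.E s s'

/-- A play: an `E`-path which is infinite (`len = ⊤`) or finite
(`len = n`) and then ends in a trap state. Values of `seq` beyond a finite
length are irrelevant. -/
structure Play (G : Game S) where
  seq : ℕ → S
  len : ℕ∞
  step : ∀ i : ℕ, (i : ℕ∞) < len → G.E (seq i) (seq (i + 1))
  fin_trap : ∀ n : ℕ, len = (n : ℕ∞) → G.Trap (seq n)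

/-- REACH wins a play if some state of the play is a goal state. -/
def ReachWinsPlay (G : Game S) (p : G.Play) : Prop :=
  ∃ k : ℕ, (k : ℕ∞) ≤ p.len ∧ p.seq k ∈ G.Goal

/-- SAFE wins a play iff REACH does not. -/
def SafeWinsPlay (G : Game S) (p : G.Play) : Prop := ¬ G.ReachWinsPlay p

/-- The list `[f 0, …, f (n-1)]`. -/
def listPrefix (f : ℕ → S) (n : ℕ) : List S := (List.range n).map f

/-- A reachability strategy: on any nonempty sequence ending in a non-trap
REACH state it chooses a `Reach`-successor. -/
def IsReachStrategy (G : Game S) (σ : List S → S) : Prop :=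
  ∀ (ω : List S) (s : S), G.isReach s → ¬ G.Trap s → G.Reach s (σ (ω ++ [s]))

/-- A safety strategy: on any nonempty sequence ending in a non-trap SAFE
state it chooses a `Safe`-successor. -/
def IsSafeStrategy (G : Game S) (σ : List S → S) : Prop :=
  ∀ (ω : List S) (s : S), ¬ G.isReach s → ¬ G.Trap s → G.Safe s (σ (ω ++ [s]))

/-- Consistency of a play with a reachability strategy. -/
def ConsistentR (G : Game S) (σ : List S → S) (p : G.Play) : Prop :=
  ∀ i : ℕ, (i : ℕ∞) < p.len → G.isReach (p.seq i) →
    p.seq (i + 1) = σ (listPrefix p.seq (i + 1))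

/-- Consistency of a play with a safety strategy. -/
def ConsistentS (G : Game S) (σ : List S → S) (p : G.Play) : Prop :=
  ∀ i : ℕ, (i : ℕ∞) < p.len → ¬ G.isReach (p.seq i) →
    p.seq (i + 1) = σ (listPrefix p.seq (i + 1))

/-- `σ` is a reachability strategy winning from `s`. -/
def WinningReachStrategyFrom (G : Game S) (σ : List S → S) (s : S) : Prop :=
  G.IsReachStrategy σ ∧
    ∀ p : G.Play, p.seq 0 = s → G.ConsistentR σ p → G.ReachWinsPlay p

/-- `σ` is a safety strategy winning from `s`. -/
def WinningSafeStrategyFrom (G : Game S) (σ : List S → S) (s : S) : Prop :=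
  G.IsSafeStrategy σ ∧
    ∀ p : G.Play, p.seq 0 = s → G.ConsistentS σ p → G.SafeWinsPlay p

/-- REACH wins from `s`. -/
def ReachWinsFrom (G : Game S) (s : S) : Prop :=
  ∃ σ : List S → S, G.WinningReachStrategyFrom σ s

/-- SAFE wins from `s`. -/
def SafeWinsFrom (G : Game S) (s : S) : Prop :=
  ∃ σ : List S → S, G.WinningSafeStrategyFrom σ s

/-- Sources of a transition predicate. -/
def Pre (T : S → S → Prop) : Set S := {s | ∃ s', T s s'}

/-- Targets of a transition predicate. -/
def Post (T : S → S → Prop) : Set S := {s' | ∃ s, T s s'}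

/-- Enforceable transitions of `T` in `G`. -/
def Enf (G : Game S) (T : S → S → Prop) (s s' : S) : Prop :=
  G.E s s' ∧ T s s' ∧ ∀ s'', G.Safe s s'' → T s s''

/-- `C` is a necessary subgoal: every play of `G` (from `Init`) reaching
`Goal` at index `n` crosses `C` at some index `k < n`. -/
def NecessarySubgoal (G : Game S) (C : S → S → Prop) : Prop :=
  ∀ p : G.Play, p.seq 0 ∈ G.Init →
    ∀ n : ℕ, (n : ℕ∞) ≤ p.len → p.seq n ∈ G.Goal →
      ∃ k < n, C (p.seq k) (p.seq (k + 1))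

/-- `ρ 0 … ρ n` is a play prefix: an `E`-path avoiding `Goal` whose last
state is not a trap state. -/
def IsPlayPrefix (G : Game S) (ρ : ℕ → S) (n : ℕ) : Prop :=
  (∀ i < n, G.E (ρ i) (ρ (i + 1))) ∧ (∀ j ≤ n, ρ j ∉ G.Goal) ∧ ¬ G.Trap (ρ n)

/-- Conformance of a play prefix with a symbolic reachability strategy. -/
def PrefixConformsR (G : Game S) (𝔖 : S → S → Prop) (ρ : ℕ → S) (n : ℕ) : Prop :=
  ∀ j < n, G.isReach (ρ j) → 𝔖 (ρ j) (ρ (j + 1))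

/-- Conformance of a play prefix with a symbolic safety strategy. -/
def PrefixConformsS (G : Game S) (𝔖 : S → S → Prop) (ρ : ℕ → S) (n : ℕ) : Prop :=
  ∀ j < n, ¬ G.isReach (ρ j) → 𝔖 (ρ j) (ρ (j + 1))

/-- A play conforms to a symbolic reachability strategy if all its play
prefixes do. -/
def PlayConformsR (G : Game S) (𝔖 : S → S → Prop) (p : G.Play) : Prop :=
  ∀ n : ℕ, (n : ℕ∞) ≤ p.len → G.IsPlayPrefix p.seq n → G.PrefixConformsR 𝔖 p.seq n

/-- A play conforms to a symbolic safety strategy if all its play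
prefixes do. -/
def PlayConformsS (G : Game S) (𝔖 : S → S → Prop) (p : G.Play) : Prop :=
  ∀ n : ℕ, (n : ℕ∞) ≤ p.len → G.IsPlayPrefix p.seq n → G.PrefixConformsS 𝔖 p.seq n

/-- `𝔖` is a winning symbolic reachability strategy from `s`. -/
def WinningSymbolicReachFrom (G : Game S) (𝔖 : S → S → Prop) (s : S) : Prop :=
  (∀ a b, 𝔖 a b → G.E a b) ∧
  (∀ p : G.Play, p.seq 0 = s → G.PlayConformsR 𝔖 p → G.ReachWinsPlay p) ∧
  (∀ (ρ : ℕ → S) (n : ℕ), ρ 0 = s → G.IsPlayPrefix ρ n → G.PrefixConformsR 𝔖 ρ n →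
      G.isReach (ρ n) → ∃ s', 𝔖 (ρ n) s' ∧ G.Reach (ρ n) s')

/-- `𝔖` is a winning symbolic safety strategy from `s`. -/
def WinningSymbolicSafeFrom (G : Game S) (𝔖 : S → S → Prop) (s : S) : Prop :=
  (∀ a b, 𝔖 a b → G.E a b) ∧
  (∀ p : G.Play, p.seq 0 = s → G.PlayConformsS 𝔖 p → G.SafeWinsPlay p) ∧
  (∀ (ρ : ℕ → S) (n : ℕ), ρ 0 = s → G.IsPlayPrefix ρ n → G.PrefixConformsS 𝔖 ρ n →
      ¬ G.isReach (ρ n) → ∃ s', 𝔖 (ρ n) s' ∧ G.Safe (ρ n) s')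

/-- Bisimulations on `G`. -/
def IsBisimulation (G : Game S) (R : S → S → Prop) : Prop :=
  ∀ s1 s2, R s1 s2 →
    ((s1 ∈ G.Goal ↔ s2 ∈ G.Goal) ∧ (s1 ∈ G.Init ↔ s2 ∈ G.Init) ∧
      (G.isReach s1 ↔ G.isReach s2)) ∧
    (∀ s1', G.E s1 s1' → ∃ s2', G.E s2 s2' ∧ R s1' s2') ∧
    (∀ s2', G.E s2 s2' → ∃ s1', G.E s1 s1' ∧ R s1' s2')

/-- The pre-game `⟨Init, Safe ∖ F, Reach ∖ F, Pre(Enf(F, G))⟩`. -/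
def preGame (G : Game S) (F : S → S → Prop) : Game S where
  isReach := G.isReach
  Safe := fun a b => G.Safe a b ∧ ¬ F a b
  Reach := fun a b => G.Reach a b ∧ ¬ F a b
  Init := G.Init
  Goal := Pre (G.Enf F)
  safe_src := fun a b h => G.safe_src a b h.1
  reach_src := fun a b h => G.reach_src a b h.1

/-- The post-game: transitions restricted to sources in `φ`. -/
def postGame (G : Game S) (φ : Set S) : Game S where
  isReach := G.isReach
  Safe := fun a b => G.Safe a b ∧ a ∈ φ
  Reach := fun a b => G.Reach a b ∧ a ∈ φ
  Init := G.Init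
  Goal := G.Goal
  safe_src := fun a b h => G.safe_src a b h.1
  reach_src := fun a b h => G.reach_src a b h.1

end Game

namespace Game

variable {S : Type u}

/-- The attractor of the goal, as an inductive predicate. -/
inductive Attr (G : Game S) : S → Prop
  | goal (s : S) (h : s ∈ G.Goal) : Attr G s
  | reach (s s' : S) (h : G.Reach s s') (h' : Attr G s') : Attr G s
  | safe (s s' : S) (h : G.Safe s s') (h' : ∀ t, G.Safe s t → Attr G t) : Attr G s

theorem exists_strategy_of (G : Game S) (d : S) :
    ∃ σ : List S → S, G.IsReachStrategy σ := by
  have key : ∀ s, ∃ t, G.isReach s → ¬ G.Trap s → G.Reach s t := by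
    intro s
    by_cases hs : G.isReach s ∧ ¬ G.Trap s
    · obtain ⟨h1, h2⟩ := hs
      simp only [Trap, not_forall, not_not] at h2
      obtain ⟨t, ht⟩ := h2
      rcases ht with ht | ht
      · exact absurd h1 (G.safe_src _ _ ht)
      · exact ⟨t, fun _ _ => ht⟩
    · exact ⟨d, fun a b => absurd ⟨a, b⟩ hs⟩
  choose f hf using key
  refine ⟨fun l => f (l.getLastD d), fun ω s h1 h2 => ?_⟩
  simpa using hf s h1 h2

theorem listPrefix_succ' (f : ℕ → S) (n : ℕ) :
    listPrefix f (n + 1) = f 0 :: listPrefix (fun i => f (i + 1)) n := by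
  simp [listPrefix, List.range_succ_eq_map, Function.comp_def]

theorem listPrefix_succ (f : ℕ → S) (n : ℕ) :
    listPrefix f (n + 1) = listPrefix f n ++ [f n] := by
  simp [listPrefix, List.range_succ]

/-- The play with its first state removed. -/
def Play.tail {G : Game S} (p : G.Play) (h : (0 : ℕ∞) < p.len) : G.Play where
  seq := fun i => p.seq (i + 1)
  len := p.len - 1
  step := fun i hi => p.step (i + 1) (by
    push_cast
    exact lt_tsub_iff_right.mp hi)
  fin_trap := fun n hn => p.fin_trap (n + 1) (by
    push_cast
    rw [← hn]
    exact (tsub_add_cancel_of_le (Order.one_le_iff_pos.mpr h)).symm)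

theorem Play.tail_wins {G : Game S} (p : G.Play) (h : (0 : ℕ∞) < p.len)
    (hw : G.ReachWinsPlay (p.tail h)) : G.ReachWinsPlay p := by
  obtain ⟨k, hk, hg⟩ := hw
  refine ⟨k + 1, ?_, hg⟩
  have h1 : (k : ℕ∞) ≤ p.len - 1 := hk
  have := add_le_add_left h1 1
  rw [tsub_add_cancel_of_le (Order.one_le_iff_pos.mpr h)] at this
  exact_mod_cast this

theorem reachWins_step (G : Game S) (s t : S) (ht : G.E s t)
    (hr : G.isReach s → G.ReachWinsFrom t)
    (hs : ∀ u, G.Safe s u → G.ReachWinsFrom u) : G.ReachWinsFrom s := by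
  classical
  obtain ⟨σ₀, hσ₀⟩ := G.exists_strategy_of s
  have key : ∀ y, ∃ τ : List S → S, G.IsReachStrategy τ ∧
      (G.ReachWinsFrom y → G.WinningReachStrategyFrom τ y) := by
    intro y
    by_cases hy : G.ReachWinsFrom y
    · obtain ⟨τ, h⟩ := hy
      exact ⟨τ, h.1, fun _ => h⟩
    · exact ⟨σ₀, hσ₀, fun h => absurd h hy⟩
  choose τ hτ1 hτ2 using key
  let σ : List S → S := fun l => match l with
    | [] => s
    | [x] => if x = s then t else σ₀ [x]
    | _ :: y :: l => τ y (y :: l)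
  refine ⟨σ, ?_, ?_⟩
  · intro ω x hx hnt
    match ω with
    | [] =>
      by_cases hxs : x = s
      · subst hxs
        rcases ht with ht | ht
        · exact absurd hx (G.safe_src _ _ ht)
        · simpa [σ] using ht
      · simpa [σ, hxs] using hσ₀ [] x hx hnt
    | [a] => exact hτ1 x [] x hx hnt
    | a :: b :: l => exact hτ1 b (b :: l) x hx hnt
  · intro p hp0 hc
    have hpos : (0 : ℕ∞) < p.len := by
      rw [pos_iff_ne_zero]
      intro h0
      exact p.fin_trap 0 (by simpa using h0) t (hp0 ▸ ht)
    apply p.tail_wins hpos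
    have hw : G.ReachWinsFrom (p.seq 1) := by
      by_cases hR : G.isReach s
      · have := hc 0 (by simpa using hpos) (by rw [hp0]; exact hR)
        have h1 : p.seq 1 = t := by simpa [listPrefix, σ, hp0] using this
        rw [h1]; exact hr hR
      · have := p.step 0 (by simpa using hpos)
        rw [hp0] at this
        rcases this with h | h
        · exact hs _ h
        · exact absurd (G.reach_src _ _ h) hR
    refine (hτ2 _ hw).2 _ rfl ?_
    intro i hi hri
    have hi' : ((i + 1 : ℕ) : ℕ∞) < p.len := by
      push_cast
      exact lt_tsub_iff_right.mp hi
    have := hc (i + 1) hi' hri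
    rw [listPrefix_succ', listPrefix_succ'] at this
    change p.seq (i + 1 + 1) = τ (p.seq 1) (listPrefix (fun i => p.seq (i + 1)) (i + 1))
    rw [listPrefix_succ']
    exact this

theorem reachWins_of_attr (G : Game S) (s : S) (h : G.Attr s) : G.ReachWinsFrom s := by
  induction h with
  | goal s h =>
    obtain ⟨σ, hσ⟩ := G.exists_strategy_of s
    exact ⟨σ, hσ, fun p hp _ => ⟨0, by simp, hp ▸ h⟩⟩
  | reach s s' h _ ih =>
    exact G.reachWins_step s s' (Or.inr h) (fun _ => ih)
      (fun u hu => absurd (G.reach_src _ _ h) (G.safe_src _ _ hu))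
  | safe s s' h _ ih =>
    exact G.reachWins_step s s' (Or.inl h) (fun hr => absurd hr (G.safe_src _ _ h)) ih

theorem attr_of_reachWins (G : Game S) (s : S) (h : G.ReachWinsFrom s) : G.Attr s := by
  classical
  by_contra hs
  obtain ⟨σ, hσ, hwin⟩ := h
  have key : ∀ x, ∃ y, (∃ z, G.Safe x z) → ¬ G.Attr x → G.Safe x y ∧ ¬ G.Attr y := by
    intro x
    by_cases hx : ∃ y, G.Safe x y ∧ ¬ G.Attr y
    · obtain ⟨y, hy⟩ := hx
      exact ⟨y, fun _ _ => hy⟩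
    · refine ⟨x, fun ⟨z, hz⟩ hn => absurd (Attr.safe x z hz fun t htt => ?_) hn⟩
      by_contra hta
      exact hx ⟨t, htt, hta⟩
  choose f hf using key
  let st : ℕ → List S × S := fun n => Nat.rec ([], s)
    (fun _ q => (q.1 ++ [q.2], if G.isReach q.2 then σ (q.1 ++ [q.2]) else f q.2)) n
  let seq : ℕ → S := fun n => (st n).2
  have hpre : ∀ n, (st n).1 = listPrefix seq n := by
    intro n
    induction n with
    | zero => rfl
    | succ n ih =>
      rw [listPrefix_succ, ← ih]
  have hnext : ∀ n, seq (n + 1) =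
      if G.isReach (seq n) then σ (listPrefix seq n ++ [seq n]) else f (seq n) := by
    intro n
    rw [← hpre]
  have hstep : ∀ n, ¬ G.Attr (seq n) → ¬ G.Trap (seq n) →
      G.E (seq n) (seq (n + 1)) ∧ ¬ G.Attr (seq (n + 1)) := by
    intro n hn hnt
    rw [hnext]
    by_cases hr : G.isReach (seq n)
    · rw [if_pos hr]
      have := hσ (listPrefix seq n) _ hr hnt
      exact ⟨Or.inr this, fun h => hn (Attr.reach _ _ this h)⟩
    · rw [if_neg hr]
      have hex : ∃ z, G.Safe (seq n) z := by
        simp only [Trap, not_forall, not_not] at hnt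
        obtain ⟨z, hz | hz⟩ := hnt
        · exact ⟨z, hz⟩
        · exact absurd (G.reach_src _ _ hz) hr
      have := hf _ hex hn
      exact ⟨Or.inl this.1, this.2⟩
  have hinv : ∀ n, (∀ j < n, ¬ G.Trap (seq j)) → ¬ G.Attr (seq n) := by
    intro n
    induction n with
    | zero => intro _; exact hs
    | succ n ih =>
      intro h
      exact (hstep n (ih fun j hj => h j (by omega)) (h n (by omega))).2
  have hlen : ∃ L : ℕ∞, (∀ j : ℕ, (j : ℕ∞) < L → ¬ G.Trap (seq j)) ∧
      ∀ n : ℕ, L = (n : ℕ∞) → G.Trap (seq n) := by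
    by_cases hT : ∃ n, G.Trap (seq n)
    · refine ⟨(Nat.find hT : ℕ), fun j hj => Nat.find_min hT (by exact_mod_cast hj), ?_⟩
      intro n hn
      have : Nat.find hT = n := by exact_mod_cast hn
      rw [← this]
      exact Nat.find_spec hT
    · refine ⟨⊤, fun j _ h => hT ⟨j, h⟩, fun n hn => absurd hn (ENat.top_ne_coe n)⟩
  obtain ⟨L, hL1, hL2⟩ := hlen
  have hinv' : ∀ n : ℕ, (n : ℕ∞) ≤ L → ¬ G.Attr (seq n) := fun n hn =>
    hinv n fun j hj => hL1 j (lt_of_lt_of_le (by exact_mod_cast hj) hn)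
  obtain ⟨k, hk, hg⟩ := hwin
    { seq := seq, len := L
      step := fun i hi => (hstep i (hinv' i hi.le) (hL1 i hi)).1
      fin_trap := hL2 } rfl (by
      intro i _ hri
      change seq (i + 1) = σ (listPrefix seq (i + 1))
      rw [hnext, listPrefix_succ]
      exact if_pos hri)
  exact hinv' k hk (Attr.goal _ hg)

end Game

/-- if `F` is a sufficient subgoal and REACH wins from `s` in
the pre-game, then REACH wins from `s` in `G`. -/
theorem reach_wins_of_wins_preGame {S : Type u} (G : Game S)
    (F : S → S → Prop) (hF : ∀ s' ∈ Game.Post F, G.ReachWinsFrom s')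
    (s : S) (h : (G.preGame F).ReachWinsFrom s) :
    G.ReachWinsFrom s := by
  apply G.reachWins_of_attr
  have hF' : ∀ a b, F a b → G.Attr b := fun a b hab =>
    G.attr_of_reachWins b (hF b ⟨a, hab⟩)
  induction (G.preGame F).attr_of_reachWins s h with
  | goal s hs =>
    obtain ⟨t, hE, hFt, hS⟩ := hs
    rcases hE with hE | hE
    · exact .safe s t hE fun u hu => hF' s u (hS u hu)
    · exact .reach s t hE (hF' s t hFt)
  | reach s s' hs h' ih =>
    exact .reach s s' hs.1 (ih ((G.preGame F).reachWins_of_attr _ h'))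
  | safe s s' hs h' ih =>
    refine .safe s s' hs.1 fun t ht => ?_
    by_cases hft : F s t
    · exact hF' s t hft
    · exact ih t ⟨ht, hft⟩ ((G.preGame F).reachWins_of_attr _ (h' t ⟨ht, hft⟩))
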